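/- arXiv:2503.22960 — 2 statements merged into one kernel-verified Lean document; each statement's English description precedes it below -/
import Mathlib

section
/- Let q be an integer with q ≥ 3 and let A ⊂ ℚ be a finite set with #A ≥ 2. If the Hausdorff dimension of K(q,A) is strictly less than 1, then for every integer p ≥ 2 with gcd(p,q) = 1, the intersection D_p ∩ K(q,A) is a finite set. -/
open MeasureTheory

/-- The self-similar set `K(q,A) = { ∑_{i=1}^∞ a_i/q^i : a_i ∈ A }`. -/
noncomputable def Kset (q : ℕ) (A : Finset ℚ) : Set ℝ :=
  { x : ℝ | ∃ a : ℕ → ℚ, (∀ i, a i ∈ A) ∧ x = ∑' i : ℕ, (a i : ℝ) / (q : ℝ) ^ (i + 1) }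

/-- The set `D_p = ⋃_{n≥1} ℤ/pⁿ` of rationals with a finite `p`-ary expansion. -/
def Dset (p : ℕ) : Set ℝ :=
  { x : ℝ | ∃ n : ℕ, 1 ≤ n ∧ ∃ m : ℤ, x = (m : ℝ) / (p : ℝ) ^ n }

/-!
Let `d` be a common denominator of the digits in `A`. In the circle `ℝ ⧸ d⁻¹ℤ` the digits vanish, so
the image of `K(q,A)` is a compact set invariant under multiplication by `q`, and the image of `D_p`
consists of `p`-power torsion points. By lifting the exponent, the `q`-orbit of a point of order
`N ∣ pⁿ` has at least `N / c` elements, where `c` depends only on `p` and `q`. On the other hand,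
points of order dividing `N` are `1 / (dN)`-separated, so a compact null set contains only `o(N)` of
them. Hence the orders of the `p`-power torsion points in the image of `K(q,A)` are bounded.
-/

open Filter Function Metric Set Topology

section Arithmetic

lemma ne_zero_of_coprime_of_two_le {p q : ℕ} (hq : 2 ≤ q) (hpq : p.Coprime q) : p ≠ 0 := by
  rintro rfl
  rw [Nat.coprime_zero_left] at hpq
  omega

lemma emultiplicity_pow_sub_one {l : ℕ} {Q : ℤ} (hl : l.Prime) (hlQ : (l : ℤ) ∣ Q - 1)
    (hl4 : l = 2 → 4 ∣ Q - 1) (k : ℕ) :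
    emultiplicity (l : ℤ) (Q ^ k - 1) =
      emultiplicity (l : ℤ) (Q - 1) + emultiplicity (l : ℤ) k := by
  have hnot : ¬ (l : ℤ) ∣ Q := fun h =>
    (Nat.prime_iff_prime_int.1 hl).not_dvd_one (by simpa using dvd_sub h hlQ)
  rcases hl.eq_two_or_odd' with rfl | hodd
  · simpa using Int.two_pow_sub_pow' (y := 1) k (hl4 rfl) (by exact_mod_cast hnot)
  · simpa [Int.natCast_emultiplicity] using
      Int.emultiplicity_pow_sub_pow hl hodd (y := 1) hlQ hnot k

lemma dvd_sub_one_mul_of_dvd_pow_sub_one {N k : ℕ} {Q : ℤ}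
    (hQ : ∀ l : ℕ, l.Prime → l ∣ N → (l : ℤ) ∣ Q - 1) (hQ4 : 2 ∣ N → 4 ∣ Q - 1)
    (h : (N : ℤ) ∣ Q ^ k - 1) : (N : ℤ) ∣ (Q - 1) * k := by
  rw [← Int.dvd_natAbs, Int.natCast_dvd_natCast, Nat.dvd_iff_prime_pow_dvd_dvd]
  intro l e hl hle
  rcases eq_or_ne e 0 with rfl | he
  · simp
  have hlN : l ∣ N := (dvd_pow_self l he).trans hle
  have hpow : (l : ℤ) ^ e ∣ Q ^ k - 1 := dvd_trans (mod_cast hle) h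
  rw [← Int.natCast_dvd_natCast, Int.dvd_natAbs, Nat.cast_pow, pow_dvd_iff_le_emultiplicity,
    emultiplicity_mul (Nat.prime_iff_prime_int.1 hl),
    ← emultiplicity_pow_sub_one hl (hQ l hl hlN) (fun h2 => hQ4 (h2 ▸ hlN)) k]
  exact pow_dvd_iff_le_emultiplicity.1 hpow

/- The square in `hr` serves the prime `2`, for which lifting the exponent needs `4 ∣ q ^ r - 1`. -/
lemma addOrderOf_dvd_mul_minimalPeriod_nsmul {G : Type*} [AddCommGroup G] {p q n r : ℕ} {x : G}
    (hr : (p : ℤ) ^ 2 ∣ (q : ℤ) ^ r - 1) (hx : p ^ n • x = 0) :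
    (addOrderOf x : ℤ) ∣ ((q : ℤ) ^ r - 1) * minimalPeriod (fun y : G => q • y) x := by
  have hprime : ∀ l : ℕ, l.Prime → l ∣ addOrderOf x → l ∣ p := fun l hl h =>
    hl.dvd_of_dvd_pow (h.trans (addOrderOf_dvd_of_nsmul_eq_zero hx))
  have hperiod : q ^ minimalPeriod (fun y : G => q • y) x • x = x := by
    have h := iterate_minimalPeriod (f := fun y : G => q • y) (x := x)
    rwa [smul_iterate] at h
  refine dvd_sub_one_mul_of_dvd_pow_sub_one (fun l hl h => ?_) (fun h => ?_) ?_
  · exact (Int.natCast_dvd_natCast.2 (hprime l hl h)).trans ((dvd_pow_self _ two_ne_zero).trans hr)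
  · have h2p : (2 : ℤ) ∣ p := mod_cast hprime 2 Nat.prime_two h
    exact (pow_dvd_pow_of_dvd h2p 2).trans hr
  · rw [← pow_mul, mul_comm r, pow_mul]
    refine dvd_trans ?_ (sub_one_dvd_pow_sub_one _ r)
    rw [addOrderOf_dvd_iff_zsmul_eq_zero, sub_smul, one_smul, sub_eq_zero]
    exact_mod_cast hperiod

lemma minimalPeriod_nsmul_pos {G : Type*} [AddCommGroup G] {q N : ℕ} {x : G} (hN : N ≠ 0)
    (hqN : q.Coprime N) (hx : N • x = 0) : 0 < minimalPeriod (fun y : G => q • y) x := by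
  refine IsPeriodicPt.minimalPeriod_pos (Nat.totient_pos.2 hN.bot_lt) ?_
  have hmod : q ^ N.totient ≡ 1 [MOD addOrderOf x] :=
    (Nat.ModEq.pow_totient hqN).of_dvd (addOrderOf_dvd_of_nsmul_eq_zero hx)
  rw [IsPeriodicPt, IsFixedPt, smul_iterate]
  simpa only [one_smul] using nsmul_eq_nsmul_iff_modEq.2 hmod

lemma exists_addOrderOf_le_mul_minimalPeriod_nsmul (G : Type*) [AddCommGroup G] {p q : ℕ}
    (hq : 2 ≤ q) (hpq : p.Coprime q) :
    ∃ c : ℕ, ∀ (x : G) (n : ℕ), p ^ n • x = 0 →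
      addOrderOf x ≤ c * minimalPeriod (fun y : G => q • y) x := by
  have hp := ne_zero_of_coprime_of_two_le hq hpq
  set r := (p ^ 2).totient
  have hr0 : r ≠ 0 := (Nat.totient_pos.2 (by positivity)).ne'
  have hr : (p : ℤ) ^ 2 ∣ (q : ℤ) ^ r - 1 := by
    simpa using Nat.modEq_iff_dvd.1 (Nat.ModEq.pow_totient (hpq.pow_left 2).symm).symm
  have hqr : 1 < q ^ r := Nat.one_lt_pow hr0 hq
  refine ⟨q ^ r - 1, fun x n hx => Nat.le_of_dvd (Nat.mul_pos (Nat.sub_pos_of_lt hqr) ?_) ?_⟩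
  · exact minimalPeriod_nsmul_pos (pow_ne_zero n hp) (hpq.pow_left n).symm hx
  · zify [hqr.le]
    exact addOrderOf_dvd_mul_minimalPeriod_nsmul hr hx

lemma minimalPeriod_le_ncard {α : Type*} {f : α → α} {s : Set α} {x : α} (hs : s.Finite)
    (hf : MapsTo f s s) (hx : x ∈ s) : minimalPeriod f x ≤ s.ncard :=
  calc minimalPeriod f x
      = ((fun j => f^[j] x) '' Iio (minimalPeriod f x)).ncard := by
        rw [iterate_injOn_Iio_minimalPeriod.ncard_image, ncard_Iio_nat]
    _ ≤ s.ncard := ncard_le_ncard (image_subset_iff.2 fun j _ => hf.iterate j hx) hs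

end Arithmetic

section Circle

variable {T : ℝ}

lemma minimalPeriod_nsmul_le_ncard_torsion {q N : ℕ} (hN : N ≠ 0) {K : Set (AddCircle T)}
    (hqK : MapsTo (fun u => q • u) K K) {u : AddCircle T} (hu : u ∈ K) (hNu : N • u = 0) :
    minimalPeriod (fun v : AddCircle T => q • v) u ≤ {v ∈ K | N • v = 0}.ncard := by
  refine minimalPeriod_le_ncard ?_ (fun v hv => ⟨hqK hv.1, ?_⟩) ⟨hu, hNu⟩
  · exact (AddCircle.finite_torsion T hN.bot_lt).subset fun _ hv => hv.2
  · rw [smul_comm, hv.2, smul_zero]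

variable [hT : Fact (0 < T)]

lemma le_mul_dist_of_nsmul_eq_zero {N : ℕ} (hN : N ≠ 0) {x y : AddCircle T} (hx : N • x = 0)
    (hy : N • y = 0) (hxy : x ≠ y) : T ≤ N * dist x y := by
  have hsub : N • (x - y) = 0 := by rw [nsmul_sub, hx, hy, sub_zero]
  have hfin : IsOfFinAddOrder (x - y) :=
    isOfFinAddOrder_iff_nsmul_eq_zero.2 ⟨N, hN.bot_lt, hsub⟩
  calc T ≤ addOrderOf (x - y) • ‖x - y‖ :=
        AddCircle.le_add_order_smul_norm_of_isOfFinAddOrder hfin (sub_ne_zero.2 hxy)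
    _ ≤ N * dist x y := by
        rw [nsmul_eq_mul, dist_eq_norm]
        gcongr
        exact addOrderOf_le_of_nsmul_eq_zero hN.bot_lt hsub

lemma ncard_torsion_mul_le_measureReal_cthickening (K : Set (AddCircle T)) {N : ℕ} (hN : N ≠ 0) :
    {u ∈ K | N • u = 0}.ncard * (2 * (T / (3 * N))) ≤
      volume.real (cthickening (T / (3 * N)) K) := by
  set δ := T / (3 * N)
  have hT0 := hT.out
  have hN1 : (1 : ℝ) ≤ N := mod_cast hN.bot_lt
  have hδ : 3 * N * δ = T := by simp only [δ]; field_simp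
  have hδ0 : 0 < δ := by positivity
  have hfin : {u ∈ K | N • u = 0}.Finite :=
    (AddCircle.finite_torsion T hN.bot_lt).subset fun _ hu => hu.2
  have hdisj : {u ∈ K | N • u = 0}.PairwiseDisjoint (closedBall · δ) := by
    intro x hx y hy hxy
    refine closedBall_disjoint_closedBall (lt_of_mul_lt_mul_left ?_ (Nat.cast_nonneg N))
    calc N * (δ + δ) < 3 * N * δ := by linarith [mul_pos (zero_lt_one.trans_le hN1) hδ0]
      _ = T := hδ
      _ ≤ N * dist x y := le_mul_dist_of_nsmul_eq_zero hN hx.2 hy.2 hxy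
  have hball : ∀ u : AddCircle T, volume.real (closedBall u δ) = 2 * δ := by
    intro u
    rw [measureReal_def, AddCircle.volume_closedBall, min_eq_right (by nlinarith),
      ENNReal.toReal_ofReal (by positivity)]
  calc {u ∈ K | N • u = 0}.ncard * (2 * δ)
      = ∑ u ∈ hfin.toFinset, volume.real (closedBall u δ) := by
        simp [hball, ncard_eq_toFinset_card _ hfin]
    _ = volume.real (⋃ u ∈ hfin.toFinset, closedBall u δ) :=
        (measureReal_biUnion_finset (by simpa using hdisj)
          fun _ _ => isClosed_closedBall.measurableSet).symm
    _ ≤ volume.real (cthickening δ K) :=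
        measureReal_mono <| iUnion₂_subset fun u hu =>
          closedBall_subset_cthickening (hfin.mem_toFinset.1 hu).1 δ

lemma isLittleO_ncard_torsion {K : Set (AddCircle T)} (hK : IsCompact K) (hK0 : volume K = 0) :
    (fun N : ℕ => ({u ∈ K | N • u = 0}.ncard : ℝ)) =o[atTop] (fun N : ℕ => (N : ℝ)) := by
  have hT0 := hT.out
  have hδ : Tendsto (fun N : ℕ => T / (3 * N)) atTop (𝓝 0) := by
    simpa [div_div] using tendsto_const_div_atTop_nhds_zero_nat (T / 3)
  have hthick : Tendsto (fun N : ℕ => volume.real (cthickening (T / (3 * N)) K)) atTop (𝓝 0) := by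
    have := (tendsto_measure_cthickening_of_isCompact (μ := volume) hK).comp hδ
    rw [hK0] at this
    exact (ENNReal.tendsto_toReal ENNReal.zero_ne_top).comp this
  refine Asymptotics.isLittleO_iff.2 fun c hc => ?_
  have hbound : 0 < 2 * T / 3 * c := by positivity
  filter_upwards [eventually_ne_atTop 0, hthick.eventually_lt_const hbound] with N hN hlt
  have hle := ncard_torsion_mul_le_measureReal_cthickening K hN
  have hN0 : (0 : ℝ) < N := mod_cast hN.bot_lt
  rw [Real.norm_natCast, Real.norm_natCast, ← div_le_iff₀ hN0]
  refine le_of_mul_le_mul_left ?_ (by positivity : 0 < 2 * T / 3)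
  calc 2 * T / 3 * ({u ∈ K | N • u = 0}.ncard / N)
      = {u ∈ K | N • u = 0}.ncard * (2 * (T / (3 * N))) := by field_simp
    _ ≤ 2 * T / 3 * c := hle.trans hlt.le

lemma finite_pow_torsion_of_mapsTo_nsmul {p q : ℕ} (hq : 2 ≤ q) (hpq : p.Coprime q)
    {K : Set (AddCircle T)} (hK : IsCompact K) (hK0 : volume K = 0)
    (hqK : MapsTo (fun u => q • u) K K) :
    {u ∈ K | ∃ n, p ^ n • u = 0}.Finite := by
  have hp := ne_zero_of_coprime_of_two_le hq hpq
  obtain ⟨c, hc⟩ := exists_addOrderOf_le_mul_minimalPeriod_nsmul (AddCircle T) hq hpq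
  obtain ⟨M, hM⟩ := eventually_atTop.1 <|
    Asymptotics.isLittleO_iff.1 (isLittleO_ncard_torsion hK hK0) (c := 1 / (c + 1)) (by positivity)
  have horder : ∀ u ∈ K, ∀ n, p ^ n • u = 0 → addOrderOf u ∈ Ioo 0 M := by
    intro u hu n hn
    have hpos : 0 < addOrderOf u := Nat.pos_of_dvd_of_pos (addOrderOf_dvd_of_nsmul_eq_zero hn)
      (Nat.pow_pos hp.bot_lt)
    refine ⟨hpos, lt_of_not_ge fun hlarge => ?_⟩
    have hupper := hM _ hlarge
    have horbit : minimalPeriod (fun v : AddCircle T => q • v) u ≤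
        {v ∈ K | addOrderOf u • v = 0}.ncard :=
      minimalPeriod_nsmul_le_ncard_torsion hpos.ne' hqK hu (addOrderOf_nsmul_eq_zero u)
    have hlower : (addOrderOf u : ℝ) ≤ c * {v ∈ K | addOrderOf u • v = 0}.ncard :=
      mod_cast (hc u n hn).trans (Nat.mul_le_mul_left c horbit)
    rw [Real.norm_natCast, Real.norm_natCast, one_div_mul_eq_div, le_div_iff₀ (by positivity)]
      at hupper
    have : (0 : ℝ) < addOrderOf u := mod_cast hpos
    nlinarith
  refine ((finite_Ioo 0 M).biUnion fun N hN =>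
    AddCircle.finite_setOfPred_addOrderOf_eq T hN.1).subset ?_
  rintro u ⟨hu, n, hn⟩
  exact mem_biUnion (horder u hu n hn) rfl

lemma volume_image_coe_addCircle_eq_zero {s : Set ℝ} (hs : volume s = 0) :
    volume (((↑) : ℝ → AddCircle T) '' s) = 0 := by
  obtain ⟨t, hst, ht, ht0⟩ := exists_measurable_superset_of_null hs
  have hpre : ((↑) : ℝ → AddCircle T) ⁻¹' ((↑) '' t) =
      ⋃ z : AddSubgroup.zmultiples T, (· + (z : ℝ)) '' t :=
    QuotientAddGroup.preimage_image_mk_eq_iUnion_image _ t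
  have hmeas : MeasurableSet (((↑) : ℝ → AddCircle T) '' t) := by
    refine measurableSet_quotient.2 ?_
    change MeasurableSet (((↑) : ℝ → AddCircle T) ⁻¹' ((↑) '' t))
    rw [hpre]
    refine MeasurableSet.iUnion fun z => ?_
    rw [image_add_right]
    exact measurable_add_const _ ht
  refine measure_mono_null (image_mono hst) ?_
  rw [AddCircle.add_projection_respects_measure T 0 hmeas]
  refine measure_mono_null inter_subset_left ?_
  rw [hpre]
  refine measure_iUnion_null fun z => ?_
  rw [image_add_right, measure_preimage_add_right, ht0]

end Circle

lemma finite_inter_preimage_of_isCoveringMap {E X : Type*} [TopologicalSpace E]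
    [TopologicalSpace X] [T1Space X] {f : E → X} (hf : IsCoveringMap f) {K : Set E}
    (hK : IsCompact K) {s : Set X} (hs : s.Finite) : (K ∩ f ⁻¹' s).Finite := by
  have hdiscrete : IsDiscrete (f ⁻¹' s) := hs.isDiscrete.preimage' hf.continuous.continuousOn
    fun x => ⟨(hf x).discreteTopology_fiber⟩
  exact (hK.inter_right (hs.isClosed.preimage hf.continuous)).finite
    (hdiscrete.mono inter_subset_right)

lemma coe_addCircle_inv_eq_zero {d : ℕ} (hd : d ≠ 0) {b : ℚ} (hb : b.den ∣ d) :
    ((b : ℝ) : AddCircle (d : ℝ)⁻¹) = 0 := by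
  obtain ⟨c, rfl⟩ := hb
  have hc : (c : ℝ) ≠ 0 := mod_cast right_ne_zero_of_mul hd
  refine (AddCircle.coe_eq_zero_iff _).2 ⟨c * b.num, ?_⟩
  have hnum : (b : ℝ) = b.num / b.den := mod_cast (Rat.num_div_den b).symm
  rw [hnum, zsmul_eq_mul]
  push_cast
  field_simp

namespace Kset

variable {q : ℕ} {A : Finset ℚ}

lemma summable_sum_norm_digit (hq : 2 ≤ q) (A : Finset ℚ) :
    Summable fun i : ℕ => ∑ b ∈ A, ‖(b : ℝ) / (q : ℝ) ^ (i + 1)‖ := by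
  have hq1 : (1 : ℝ) < q := mod_cast hq
  refine summable_sum fun b _ => Summable.norm ?_
  simp only [div_eq_mul_inv, ← inv_pow]
  exact ((summable_geometric_of_lt_one (by positivity) (inv_lt_one_of_one_lt₀ hq1)).comp_injective
    (add_left_injective 1)).mul_left _

lemma norm_digit_le {b : ℚ} (hb : b ∈ A) (i : ℕ) :
    ‖(b : ℝ) / (q : ℝ) ^ (i + 1)‖ ≤ ∑ b ∈ A, ‖(b : ℝ) / (q : ℝ) ^ (i + 1)‖ :=
  A.single_le_sum (f := fun b : ℚ => ‖(b : ℝ) / (q : ℝ) ^ (i + 1)‖) (fun _ _ => norm_nonneg _) hb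

lemma eq_image (q : ℕ) (A : Finset ℚ) :
    Kset q A = (fun a : ℕ → ℚ => ∑' i : ℕ, (a i : ℝ) / (q : ℝ) ^ (i + 1)) ''
      univ.pi fun _ => (A : Set ℚ) := by
  ext x
  simp [Kset, eq_comm]

lemma isCompact (hq : 2 ≤ q) (A : Finset ℚ) : IsCompact (Kset q A) := by
  rw [eq_image]
  refine (isCompact_univ_pi fun _ => A.finite_toSet.isCompact).image_of_continuousOn ?_
  refine continuousOn_tsum (fun i => ?_) (summable_sum_norm_digit hq A)
    fun i a ha => norm_digit_le (ha i trivial) i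
  exact ((Rat.continuous_coe_real.comp (continuous_apply i)).div_const _).continuousOn

lemma exists_mul_sub_mem (hq : 2 ≤ q) {x : ℝ} (hx : x ∈ Kset q A) :
    ∃ b ∈ A, q * x - (b : ℝ) ∈ Kset q A := by
  obtain ⟨a, ha, rfl⟩ := hx
  have hsum : Summable fun i : ℕ => (a i : ℝ) / (q : ℝ) ^ (i + 1) :=
    (summable_sum_norm_digit hq A).of_norm_bounded fun i => norm_digit_le (ha i) i
  have hq0 : (q : ℝ) ≠ 0 := by positivity
  refine ⟨a 0, ha 0, fun i => a (i + 1), fun i => ha _, ?_⟩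
  rw [sub_eq_iff_eq_add', hsum.tsum_eq_zero_add, mul_add, ← tsum_mul_left]
  congr 1
  · rw [zero_add, pow_one, mul_div_cancel₀ _ hq0]
  · refine tsum_congr fun i => ?_
    rw [pow_succ' _ (i + 1), mul_div_assoc', mul_div_mul_left _ _ hq0]

lemma mapsTo_nsmul_image_coe (hq : 2 ≤ q) {d : ℕ} (hd : d ≠ 0) (hA : ∀ b ∈ A, b.den ∣ d) :
    MapsTo (fun u => q • u) (((↑) : ℝ → AddCircle (d : ℝ)⁻¹) '' Kset q A) ((↑) '' Kset q A) := by
  rintro _ ⟨x, hx, rfl⟩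
  obtain ⟨b, hb, hxb⟩ := exists_mul_sub_mem hq hx
  refine ⟨_, hxb, ?_⟩
  rw [AddCircle.coe_sub, coe_addCircle_inv_eq_zero hd (hA b hb), sub_zero, ← nsmul_eq_mul,
    AddCircle.coe_nsmul]

end Kset

lemma Dset.exists_pow_nsmul_coe_eq_zero {p d : ℕ} (hp : p ≠ 0) (hd : d ≠ 0) {x : ℝ}
    (hx : x ∈ Dset p) : ∃ n, p ^ n • (x : AddCircle (d : ℝ)⁻¹) = 0 := by
  obtain ⟨n, -, m, rfl⟩ := hx
  have hcancel : p ^ n • ((m : ℝ) / (p : ℝ) ^ n) = ((m : ℚ) : ℝ) := by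
    rw [nsmul_eq_mul, Nat.cast_pow, mul_div_cancel₀ _ (by positivity), Rat.cast_intCast]
  refine ⟨n, ?_⟩
  rw [← AddCircle.coe_nsmul, hcancel, coe_addCircle_inv_eq_zero hd (by simp)]

theorem finite_intersection_of_dimH_lt_one_general {p q : ℕ} (hq : 2 ≤ q) (hpq : p.Coprime q)
    {A : Finset ℚ} (hK0 : volume (Kset q A) = 0) : (Dset p ∩ Kset q A).Finite := by
  have hp := ne_zero_of_coprime_of_two_le hq hpq
  set d := ∏ b ∈ A, b.den
  have hd : d ≠ 0 := Finset.prod_ne_zero_iff.2 fun b _ => b.den_nz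
  have : Fact (0 < (d : ℝ)⁻¹) := ⟨by positivity⟩
  have hK := Kset.isCompact hq A
  have htorsion := finite_pow_torsion_of_mapsTo_nsmul hq hpq (hK.image (AddCircle.continuous_mk' _))
    (volume_image_coe_addCircle_eq_zero hK0)
    (Kset.mapsTo_nsmul_image_coe hq hd fun b => A.dvd_prod_of_mem Rat.den)
  refine (finite_inter_preimage_of_isCoveringMap (AddCircle.isCoveringMap_coe _) hK
    htorsion).subset ?_
  rintro x ⟨hxD, hxK⟩
  exact ⟨hxK, mem_image_of_mem _ hxK, Dset.exists_pow_nsmul_coe_eq_zero hp hd hxD⟩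

theorem finite_intersection_of_dimH_lt_one (q : ℕ) (hq : 3 ≤ q) (A : Finset ℚ)
    (hA : 2 ≤ A.card) (hdim : dimH (Kset q A) < 1) :
    ∀ p : ℕ, 2 ≤ p → Nat.Coprime p q → (Dset p ∩ Kset q A).Finite := by
  intro p _ hpq
  have hK0 : volume (Kset q A) = 0 := by
    rw [← hausdorffMeasure_real]
    exact_mod_cast hausdorffMeasure_of_dimH_lt (d := 1) (mod_cast hdim)
  exact finite_intersection_of_dimH_lt_one_general (by omega) hpq hK0
end

section
/- Let p ≥ 2 and q ≥ 3 be integers with gcd(p,q) = 1, and let A = {0, 1, …, q−2, q} (the integers 0 through q−2 together with q). Then the intersection D_p ∩ K(q,A) is a finite set. -/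
open MeasureTheory

/-!
Let `T = 1/N` for a common denominator `N` of the digits and work in the circle `ℝ/Tℤ`: the image
`C` of `K(q,A)` is closed and invariant under multiplication by `q`, and points of `D_p` become
`p`-power torsion. If `K(q,A)` is Lebesgue null, then `C` misses an open arc.

Put `g = q ^ φ(p²)`, so that `g ≡ 1` modulo `p²`. Modulo every power of `p`, the geometric sums
`1 + g + ⋯ + g ^ (k - 1) = (g ^ k - 1) / (g - 1)` take all values, so the `g`-orbit of a `p`-power
torsion point `x` is the whole coset `x + ℤ • (g - 1) • x`. A coset contained in `C` cannot meet the
missing arc, which bounds the order of `(g - 1) • x`. Hence the points of `D_p ∩ K(q,A)` have a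
common denominator, and `K(q,A)` is bounded.

For the digits `0, …, q - 2, q` the set is null because `0 * q + q = 1 * q + 0`: it is covered by
fewer than `q ^ 2` translates of its copy scaled by `q ^ (-2)`.
-/

theorem ne_zero_of_coprime_of_one_lt {p q : ℕ} (hpq : p.Coprime q) (hq : 1 < q) : p ≠ 0 := by
  rintro rfl
  exact hq.ne' ((Nat.coprime_zero_left q).1 hpq)

section GeometricSums

open Finset

theorem geom_sum_range_mul {R : Type*} [Semiring R] (x : R) (m n : ℕ) :
    ∑ i ∈ range (m * n), x ^ i = (∑ i ∈ range n, (x ^ m) ^ i) * ∑ i ∈ range m, x ^ i := by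
  induction n with
  | zero => simp
  | succ n ih =>
    rw [Nat.mul_succ, sum_range_add, ih, sum_range_succ, add_mul, ← pow_mul, mul_sum _ _ (x ^ _)]
    simp only [pow_add]

theorem geom_sum_modEq_of_modEq_one {m x : ℤ} (hx : x ≡ 1 [ZMOD m]) (n : ℕ) :
    ∑ i ∈ range n, x ^ i ≡ n [ZMOD m] := by
  simpa using Int.ModEq.sum (s := range n) fun i _ ↦ hx.pow i

theorem exists_natCast_modEq {p : ℕ} (hp : p ≠ 0) (t : ℤ) : ∃ r : ℕ, (r : ℤ) ≡ t [ZMOD p] := by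
  refine ⟨(t % p).toNat, ?_⟩
  rw [Int.toNat_of_nonneg (Int.emod_nonneg t (mod_cast hp))]
  exact Int.mod_modEq t p

theorem exists_mul_modEq_of_isCoprime {a m : ℤ} (h : IsCoprime a m) (t : ℤ) :
    ∃ s, a * s ≡ t [ZMOD m] := by
  obtain ⟨u, v, huv⟩ := h
  exact ⟨u * t, Int.modEq_iff_dvd.2 ⟨v * t, by linear_combination -t * huv⟩⟩

theorem exists_geom_sum_modEq {p : ℕ} (hp : p ≠ 0) {g : ℤ} (hg : g ≡ 1 [ZMOD p ^ 2]) (t : ℤ)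
    (n : ℕ) : ∃ k : ℕ, ∑ i ∈ range k, g ^ i ≡ t [ZMOD p ^ n] := by
  induction n generalizing g t with
  | zero => exact ⟨0, by simpa using Int.modEq_one⟩
  | succ n ih =>
    have hg_one : g ≡ 1 [ZMOD p] := hg.of_dvd (dvd_pow_self _ two_ne_zero)
    -- `r` fixes the residue modulo `p`. As `1 + g + ⋯ + g ^ (p - 1)` is `p` times a unit
    -- modulo `p`, the rest of the sum is `p` times a unit times a geometric sum in `g ^ p`, to
    -- which induction applies.
    obtain ⟨r, hr⟩ := exists_natCast_modEq hp t
    obtain ⟨t', ht'⟩ := ((geom_sum_modEq_of_modEq_one hg_one r).trans hr).dvd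
    obtain ⟨c, hc⟩ := (geom_sum_modEq_of_modEq_one hg p).symm.dvd
    have hg_coprime : IsCoprime g p :=
      let ⟨d, hd⟩ := hg_one.dvd
      ⟨1, d, by linear_combination -hd⟩
    have hc_coprime : IsCoprime (1 + p * c) (p : ℤ) := ⟨1, -c, by ring⟩
    obtain ⟨s, hs⟩ :=
      exists_mul_modEq_of_isCoprime ((hg_coprime.pow_left.mul_left hc_coprime).pow_right) t'
    obtain ⟨k, hk⟩ := ih (g := g ^ p) (by simpa using hg.pow p) s
    refine ⟨r + p * k, ?_⟩
    calc ∑ i ∈ range (r + p * k), g ^ i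
      _ = ∑ i ∈ range r, g ^ i
            + p * (g ^ r * (1 + p * c) * ∑ i ∈ range k, (g ^ p) ^ i) := by
          simp only [sum_range_add, pow_add, ← mul_sum]
          rw [geom_sum_range_mul]
          linear_combination g ^ r * (∑ i ∈ range k, (g ^ p) ^ i) * hc
      _ ≡ ∑ i ∈ range r, g ^ i + p * t' [ZMOD p ^ (n + 1)] := by
          rw [pow_succ' (p : ℤ)]
          exact (((hk.mul_left _).trans hs).mul_left' (c := (p : ℤ))).add_left _
      _ = t := by linear_combination -ht'

theorem exists_pow_zsmul_eq_add_zsmul {G : Type*} [AddCommGroup G] {p : ℕ} (hp : p ≠ 0) {g : ℤ}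
    (hg : g ≡ 1 [ZMOD p ^ 2]) {x : G} {n : ℕ} (hx : p ^ n • x = 0) (t : ℤ) :
    ∃ k : ℕ, g ^ k • x = x + t • (g - 1) • x := by
  obtain ⟨k, hk⟩ := exists_geom_sum_modEq hp hg t n
  have hx_order : (addOrderOf x : ℤ) ∣ (p : ℤ) ^ n := mod_cast addOrderOf_dvd_of_nsmul_eq_zero hx
  have hsum : (∑ i ∈ range k, g ^ i) • x = t • x :=
    zsmul_eq_zsmul_iff_modEq.2 (hk.of_dvd hx_order)
  refine ⟨k, ?_⟩
  calc g ^ k • x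
    _ = (1 + (g - 1) * ∑ i ∈ range k, g ^ i) • x := by rw [mul_geom_sum, add_sub_cancel]
    _ = x + (g - 1) • t • x := by rw [add_smul, one_smul, mul_smul, hsum]
    _ = x + t • (g - 1) • x := by rw [smul_comm]

end GeometricSums

section Circle

open Set

variable {T : ℝ}

theorem exists_norm_sub_zsmul_le {z : AddCircle T} (hz : z ≠ 0) (c : AddCircle T) :
    ∃ t : ℤ, ‖c - t • z‖ ≤ ‖z‖ := by
  obtain ⟨z, rfl⟩ := QuotientAddGroup.mk_surjective z
  obtain ⟨c, rfl⟩ := QuotientAddGroup.mk_surjective c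
  obtain ⟨δ, hδ, hδ_norm⟩ : ∃ δ : ℝ, (δ : AddCircle T) = z ∧ |δ| = ‖(z : AddCircle T)‖ :=
    ⟨z - round (T⁻¹ * z) * T, by
      rw [← zsmul_eq_mul, AddCircle.coe_sub, AddCircle.coe_zsmul, AddCircle.coe_period, smul_zero,
        sub_zero], (AddCircle.norm_eq T).symm⟩
  have hδ_ne : δ ≠ 0 := by
    rintro rfl
    exact hz (hδ.symm.trans (AddCircle.coe_zero T))
  refine ⟨round (c / δ), ?_⟩
  calc ‖(c : AddCircle T) - round (c / δ) • (z : AddCircle T)‖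
    _ = ‖((c - round (c / δ) • δ : ℝ) : AddCircle T)‖ := by
        rw [AddCircle.coe_sub, AddCircle.coe_zsmul, hδ]
    _ ≤ |c - round (c / δ) • δ| := QuotientAddGroup.norm_mk_le_norm
    _ = |c / δ - round (c / δ)| * |δ| := by
        rw [← abs_mul, sub_mul, div_mul_cancel₀ _ hδ_ne, zsmul_eq_mul]
    _ ≤ 1 * |δ| := by gcongr; linarith [abs_sub_round (c / δ)]
    _ = ‖(z : AddCircle T)‖ := by rw [one_mul, hδ_norm]

theorem image_coe_ne_univ_of_volume_eq_zero {K : Set ℝ} (hK : volume K = 0) :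
    ((↑) : ℝ → AddCircle T) '' K ≠ univ := by
  intro hK_univ
  have hcover : univ ⊆ ⋃ n : ℤ, (· + n • T) ⁻¹' K := by
    intro x _
    obtain ⟨y, hy, hyx⟩ : (x : AddCircle T) ∈ (↑) '' K := hK_univ ▸ mem_univ _
    obtain ⟨n, hn⟩ := AddCircle.coe_eq_zero_iff T |>.1 (sub_eq_zero.2 hyx)
    exact mem_iUnion.2 ⟨n, by simpa [hn] using hy⟩
  have hnull : volume (⋃ n : ℤ, (· + n • T) ⁻¹' K) = 0 :=
    measure_iUnion_null fun n ↦ by rw [measure_preimage_add_right, hK]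
  simpa using measure_mono_null hcover hnull

theorem finite_setOf_zsmul_coe_eq_zero (hT : T ≠ 0) {K : Set ℝ} (hK : IsCompact K) {M : ℤ}
    (hM : M ≠ 0) : {x ∈ K | M • (x : AddCircle T) = 0}.Finite := by
  have hM' : (M : ℝ) ≠ 0 := mod_cast hM
  have hfin : {n : ℤ | n • (T / M) ∈ K}.Finite :=
    (Filter.mem_cofinite.1 (Int.tendsto_zmultiplesHom_cofinite (div_ne_zero hT hM')
      hK.compl_mem_cocompact)).subset fun n hn ↦ not_not.2 hn
  refine (hfin.image (· • (T / M))).subset fun x ⟨hxK, hx⟩ ↦ ?_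
  obtain ⟨n, hn⟩ := AddCircle.coe_eq_zero_iff T |>.1 hx
  have hnx : n • (T / M) = x := by
    simp only [zsmul_eq_mul] at hn ⊢
    field_simp
    linarith
  exact ⟨n, by rwa [mem_ofPred_eq, hnx], hnx⟩

variable [hT : Fact (0 < T)]

theorem exists_nsmul_eq_zero_of_coset_subset {C : Set (AddCircle T)} (hC : IsClosed C)
    (hC_ne : C ≠ univ) :
    ∃ N : ℕ, N ≠ 0 ∧ ∀ x y : AddCircle T, (∀ t : ℤ, x + t • y ∈ C) → N • y = 0 := by
  obtain ⟨c, hc⟩ := (ne_univ_iff_exists_notMem C).1 hC_ne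
  obtain ⟨ε, hε, hball⟩ := Metric.isOpen_iff.1 hC.isOpen_compl c hc
  obtain ⟨n, hn⟩ := exists_nat_gt (T / ε)
  have hn_pos : 0 < n := by exact_mod_cast (div_pos hT.out hε).trans hn
  refine ⟨n.factorial, n.factorial_ne_zero, fun x y hxy ↦ ?_⟩
  -- By Dirichlet some `j • y` with `1 ≤ j ≤ n` is shorter than `ε`; unless it vanishes, its
  -- multiples are `ε`-dense.
  obtain ⟨j, hj, hj_norm⟩ := AddCircle.exists_norm_nsmul_le y hn_pos
  obtain ⟨hj_pos, hj_le⟩ := mem_Icc.1 hj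
  have hj_lt : ‖j • y‖ < ε := by
    refine hj_norm.trans_lt ?_
    rw [div_lt_comm₀ (by positivity) hε]
    exact hn.trans (mod_cast n.lt_succ_self)
  suffices hj_zero : j • y = 0 by
    obtain ⟨m, hm⟩ := Nat.dvd_factorial hj_pos hj_le
    rw [hm, mul_comm, mul_smul, hj_zero, smul_zero]
  by_contra hj_ne
  obtain ⟨t, ht⟩ := exists_norm_sub_zsmul_le hj_ne (c - x)
  refine hball (a := x + t • j • y) ?_ ?_
  · rw [mem_ball_iff_norm', ← sub_sub]
    exact ht.trans_lt hj_lt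
  · simpa [mul_smul] using hxy (t * j)

theorem exists_zsmul_eq_zero_of_isClosed_of_mapsTo {p q : ℕ} (hq : 1 < q) (hpq : p.Coprime q)
    {C : Set (AddCircle T)} (hC : IsClosed C) (hC_ne : C ≠ univ) (hqC : MapsTo (q • ·) C C) :
    ∃ M : ℤ, M ≠ 0 ∧ ∀ x ∈ C, ∀ n : ℕ, p ^ n • x = 0 → M • x = 0 := by
  have hp : p ≠ 0 := ne_zero_of_coprime_of_one_lt hpq hq
  set s := (p ^ 2).totient
  have hs : s ≠ 0 := (Nat.totient_pos.2 (by positivity)).ne'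
  have hg : (q : ℤ) ^ s ≡ 1 [ZMOD p ^ 2] := by
    exact_mod_cast Nat.ModEq.pow_totient (hpq.pow_left 2).symm
  have hg_ne : (q : ℤ) ^ s - 1 ≠ 0 :=
    sub_ne_zero.2 (one_lt_pow₀ (by exact_mod_cast hq) hs).ne'
  obtain ⟨N, hN, hNC⟩ := exists_nsmul_eq_zero_of_coset_subset hC hC_ne
  refine ⟨N * (q ^ s - 1), mul_ne_zero (mod_cast hN) hg_ne, fun x hx n hxn ↦ ?_⟩
  rw [mul_smul, natCast_zsmul]
  refine hNC x _ fun t ↦ ?_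
  obtain ⟨k, hk⟩ := exists_pow_zsmul_eq_add_zsmul hp hg hxn t
  have horbit : q ^ (s * k) • x ∈ C := by
    simpa only [smul_iterate] using hqC.iterate (s * k) hx
  rw [← hk, ← pow_mul]
  exact_mod_cast horbit

end Circle

section SelfSimilarSet

variable {q : ℕ} {A : Finset ℚ}

theorem norm_digit_div_pow_le {a : ℚ} (ha : a ∈ A) (i : ℕ) :
    ‖(a : ℝ) / (q : ℝ) ^ (i + 1)‖ ≤ (∑ b ∈ A, |(b : ℝ)|) * (q : ℝ)⁻¹ ^ (i + 1) := by
  rw [norm_div, norm_pow, RCLike.norm_natCast, inv_pow, ← div_eq_mul_inv, Real.norm_eq_abs]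
  gcongr
  exact Finset.single_le_sum (f := fun b : ℚ ↦ |(b : ℝ)|) (fun _ _ ↦ abs_nonneg _) ha

theorem summable_mul_inv_natCast_pow (hq : 1 < q) (c : ℝ) :
    Summable fun i : ℕ ↦ c * (q : ℝ)⁻¹ ^ (i + 1) := by
  have hq_inv : (q : ℝ)⁻¹ < 1 := inv_lt_one_of_one_lt₀ (mod_cast hq)
  exact ((summable_nat_add_iff 1).2
    (summable_geometric_of_lt_one (by positivity) hq_inv)).mul_left c

theorem exists_mem_Kset_mul_eq_add (hq : 1 < q) {x : ℝ} (hx : x ∈ Kset q A) :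
    ∃ a ∈ A, ∃ y ∈ Kset q A, q * x = y + a := by
  obtain ⟨a, ha, rfl⟩ := hx
  refine ⟨a 0, ha 0, _, ⟨fun i ↦ a (i + 1), fun i ↦ ha (i + 1), rfl⟩, ?_⟩
  have hq_ne : (q : ℝ) ≠ 0 := by positivity
  have hsum : Summable fun i ↦ (a i : ℝ) / (q : ℝ) ^ (i + 1) :=
    (summable_mul_inv_natCast_pow hq _).of_norm_bounded fun i ↦ norm_digit_div_pow_le (ha i) i
  have hterm (i : ℕ) : (q : ℝ) * (a (i + 1) / (q : ℝ) ^ (i + 1 + 1)) = a (i + 1) / q ^ (i + 1) := by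
    rw [pow_succ _ (i + 1)]
    field_simp
  rw [hsum.tsum_eq_zero_add, mul_add, ← tsum_mul_left, zero_add, pow_one, mul_div_cancel₀ _ hq_ne,
    add_comm]
  simp only [hterm]

theorem isCompact_Kset (hq : 1 < q) : IsCompact (Kset q A) := by
  have hrange : Kset q A =
      Set.range fun a : ℕ → A ↦ ∑' i : ℕ, ((a i : ℚ) : ℝ) / (q : ℝ) ^ (i + 1) := by
    ext x
    constructor
    · rintro ⟨a, ha, rfl⟩
      exact ⟨fun i ↦ ⟨a i, ha i⟩, rfl⟩
    · rintro ⟨a, rfl⟩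
      exact ⟨fun i ↦ a i, fun i ↦ (a i).2, rfl⟩
  rw [hrange]
  refine isCompact_range (continuous_tsum (fun i ↦ ?_) (summable_mul_inv_natCast_pow hq _)
    fun i a ↦ norm_digit_div_pow_le (a i).2 i)
  exact (Rat.continuous_coe_real.comp
    (continuous_subtype_val.comp (continuous_apply i))).div_const _

theorem mapsTo_nsmul_image_coe_Kset (hq : 1 < q) {T : ℝ}
    (hA : ∀ a ∈ A, ((a : ℝ) : AddCircle T) = 0) :
    Set.MapsTo (q • ·) (((↑) : ℝ → AddCircle T) '' Kset q A) ((↑) '' Kset q A) := by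
  rintro _ ⟨x, hx, rfl⟩
  obtain ⟨a, ha, y, hy, hxy⟩ := exists_mem_Kset_mul_eq_add hq hx
  refine ⟨y, hy, ?_⟩
  calc (y : AddCircle T)
    _ = ((y + a : ℝ) : AddCircle T) := by rw [AddCircle.coe_add, hA a ha, add_zero]
    _ = q • (x : AddCircle T) := by rw [← hxy, ← nsmul_eq_mul, AddCircle.coe_nsmul]

theorem volume_eq_zero_of_forall_exists_mul_sub_mem {K : Set ℝ} (hK : volume K ≠ ⊤) {c : ℝ}
    {W : Finset ℝ} (hW : W.card < c) (h : ∀ x ∈ K, ∃ w ∈ W, c * x - w ∈ K) : volume K = 0 := by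
  have hc : 0 < c := W.card.cast_nonneg.trans_lt hW
  have hcover : K ⊆ ⋃ w ∈ W, (c * ·) ⁻¹' ((· + -w) ⁻¹' K) := fun x hx ↦ by
    obtain ⟨w, hw, hxw⟩ := h x hx
    exact Set.mem_biUnion hw hxw
  have hle : volume K ≤ W.card * (ENNReal.ofReal c⁻¹ * volume K) := by
    calc volume K
      _ ≤ ∑ w ∈ W, volume ((c * ·) ⁻¹' ((· + -w) ⁻¹' K)) :=
          (measure_mono hcover).trans (measure_biUnion_finset_le _ _)
      _ = W.card * (ENNReal.ofReal c⁻¹ * volume K) := by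
          simp only [Real.volume_preimage_mul_left hc.ne', measure_preimage_add_right,
            abs_of_pos (inv_pos.2 hc), Finset.sum_const, nsmul_eq_mul]
  by_contra hne
  have hratio : W.card * ENNReal.ofReal c⁻¹ < 1 := by
    rw [← ENNReal.ofReal_natCast, ← ENNReal.ofReal_mul W.card.cast_nonneg, ENNReal.ofReal_lt_one,
      ← div_eq_mul_inv, div_lt_one hc]
    exact hW
  have hlt : W.card * ENNReal.ofReal c⁻¹ * volume K < 1 * volume K :=
    ENNReal.mul_lt_mul_left hne hK hratio
  rw [one_mul, mul_assoc] at hlt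
  exact hle.not_gt hlt

theorem volume_Kset_eq_zero_of_not_injOn (hq : 1 < q) (hA : A.card ≤ q)
    (h : ¬ Set.InjOn (fun ab : ℚ × ℚ ↦ (ab.1 * q + ab.2 : ℝ)) (A ×ˢ A : Finset (ℚ × ℚ))) :
    volume (Kset q A) = 0 := by
  set W : Finset ℝ := (A ×ˢ A).image fun ab ↦ (ab.1 * q + ab.2 : ℝ)
  have hW_nat : W.card < q ^ 2 := by
    calc W.card
      _ < (A ×ˢ A).card := lt_of_le_of_ne Finset.card_image_le (mt Finset.card_image_iff.1 h)
      _ ≤ q ^ 2 := by rw [Finset.card_product, ← sq]; gcongr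
  have hW : (W.card : ℝ) < (q : ℝ) ^ 2 := mod_cast hW_nat
  refine volume_eq_zero_of_forall_exists_mul_sub_mem (isCompact_Kset hq).measure_lt_top.ne hW
    fun x hx ↦ ?_
  obtain ⟨a, ha, y, hy, hxy⟩ := exists_mem_Kset_mul_eq_add hq hx
  obtain ⟨b, hb, z, hz, hyz⟩ := exists_mem_Kset_mul_eq_add hq hy
  refine ⟨a * q + b, Finset.mem_image.2 ⟨(a, b), Finset.mk_mem_product ha hb, rfl⟩, ?_⟩
  have hz_eq : (q : ℝ) ^ 2 * x - (a * q + b) = z := by linear_combination q * hxy + hyz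
  rwa [hz_eq]

theorem volume_Kset_insert_image_range_eq_zero (hq : 3 ≤ q) :
    volume (Kset q (insert (q : ℚ) ((Finset.range (q - 1)).image (fun k : ℕ ↦ (k : ℚ))))) = 0 := by
  have hcard : (insert (q : ℚ) ((Finset.range (q - 1)).image (fun k : ℕ ↦ (k : ℚ)))).card ≤ q := by
    calc _
      _ ≤ ((Finset.range (q - 1)).image (fun k : ℕ ↦ (k : ℚ))).card + 1 := Finset.card_insert_le _ _
      _ ≤ (Finset.range (q - 1)).card + 1 := by gcongr; exact Finset.card_image_le
      _ = q := by rw [Finset.card_range]; omega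
  refine volume_Kset_eq_zero_of_not_injOn (by omega) hcard fun hinj ↦ ?_
  have hzero : 0 < q - 1 := by omega
  have hone : 1 < q - 1 := by omega
  have hcollision : ((0, q) : ℚ × ℚ) = (1, 0) :=
    hinj (by simp [hzero]) (by simp [hzero, hone]) (by simp)
  simp at hcollision

end SelfSimilarSet

section FiniteExpansions

theorem coe_addCircle_inv_natCast_eq_zero {N : ℕ} (hN : N ≠ 0) {x : ℝ} {m : ℤ} (h : x * N = m) :
    (x : AddCircle (N : ℝ)⁻¹) = 0 := by
  have hN' : (N : ℝ) ≠ 0 := mod_cast hN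
  refine AddCircle.coe_eq_zero_iff _ |>.2 ⟨m, ?_⟩
  rw [zsmul_eq_mul, ← h, mul_inv_cancel_right₀ hN']

theorem exists_natCast_mul_eq_intCast (A : Finset ℚ) :
    ∃ N : ℕ, N ≠ 0 ∧ ∀ a ∈ A, ∃ m : ℤ, (a : ℝ) * N = m := by
  refine ⟨∏ a ∈ A, a.den, Finset.prod_ne_zero_iff.2 fun a _ ↦ a.den_ne_zero, fun a ha ↦ ?_⟩
  obtain ⟨d, hd⟩ := Finset.dvd_prod_of_mem Rat.den ha
  refine ⟨a.num * d, ?_⟩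
  rw [hd]
  exact_mod_cast show a * (a.den * d : ℕ) = (a.num * d : ℤ) by
    push_cast
    rw [← mul_assoc, a.mul_den_eq_num]

theorem exists_pow_nsmul_coe_eq_zero_of_mem_Dset {p N : ℕ} (hp : p ≠ 0) (hN : N ≠ 0) {x : ℝ}
    (hx : x ∈ Dset p) : ∃ n : ℕ, p ^ n • (x : AddCircle (N : ℝ)⁻¹) = 0 := by
  obtain ⟨n, -, m, rfl⟩ := hx
  refine ⟨n, ?_⟩
  rw [← AddCircle.coe_nsmul]
  refine coe_addCircle_inv_natCast_eq_zero hN (m := m * N) ?_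
  rw [nsmul_eq_mul]
  push_cast
  field_simp

end FiniteExpansions

theorem finite_intersection_special_digit_set_general {p q : ℕ} (hq : 1 < q)
    (hpq : p.Coprime q) {A : Finset ℚ} (hA : volume (Kset q A) = 0) :
    (Dset p ∩ Kset q A).Finite := by
  have hp : p ≠ 0 := ne_zero_of_coprime_of_one_lt hpq hq
  have hK : IsCompact (Kset q A) := isCompact_Kset hq
  obtain ⟨N, hN, hNA⟩ := exists_natCast_mul_eq_intCast A
  have : Fact (0 < (N : ℝ)⁻¹) := ⟨by positivity⟩
  have hdigits : ∀ a ∈ A, ((a : ℝ) : AddCircle (N : ℝ)⁻¹) = 0 := fun a ha ↦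
    let ⟨_, hm⟩ := hNA a ha
    coe_addCircle_inv_natCast_eq_zero hN hm
  have hclosed : IsClosed (((↑) : ℝ → AddCircle (N : ℝ)⁻¹) '' Kset q A) :=
    (hK.image (AddCircle.continuous_mk' _)).isClosed
  obtain ⟨M, hM, htorsion⟩ := exists_zsmul_eq_zero_of_isClosed_of_mapsTo hq hpq hclosed
    (image_coe_ne_univ_of_volume_eq_zero hA)
    (mapsTo_nsmul_image_coe_Kset hq hdigits)
  refine (finite_setOf_zsmul_coe_eq_zero (inv_ne_zero (Nat.cast_ne_zero.2 hN)) hK hM).subset ?_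
  rintro x ⟨hxD, hxK⟩
  obtain ⟨n, hn⟩ := exists_pow_nsmul_coe_eq_zero_of_mem_Dset hp hN hxD
  exact ⟨hxK, htorsion x (Set.mem_image_of_mem _ hxK) n hn⟩

theorem finite_intersection_special_digit_set (p q : ℕ) (hp : 2 ≤ p) (hq : 3 ≤ q)
    (hpq : Nat.Coprime p q)
    (A : Finset ℚ) (hA : A = insert (q : ℚ) ((Finset.range (q - 1)).image (fun k : ℕ => (k : ℚ)))) :
    (Dset p ∩ Kset q A).Finite := by
  subst hA
  exact finite_intersection_special_digit_set_general (by omega) hpq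
    (volume_Kset_insert_image_range_eq_zero hq)
end
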